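/- Let u be a C¹ convex function on a neighborhood of the closed disc B̄_t(0) ⊂ ℝ² with u(0) = 0 and u ≥ 0, and let b := sup_{B̄_t(0)}|Du|. Suppose m > 0 and τ ∈ (0, t] are such that u(x₁, 0) ≤ m for all x₁ ∈ (−τ, t). Then for every point x = (x₁, x₂) with t/4 < x₁ < 3t/4 and |x₂| < t/4, one has |∂_{x₁}u(x₁,x₂)| ≤ (8/t)·( m + 2b|x₂| ). -/

import Mathlib

open Metric Set MeasureTheory

noncomputable section

abbrev E2 : Type := EuclideanSpace ℝ (Fin 2)

/-- The point of `ℝ²` with coordinates `(a, b)`. -/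
def pt (a b : ℝ) : E2 := (WithLp.equiv 2 (Fin 2 → ℝ)).symm ![a, b]

/-- The standard basis vectors of `ℝ²`. -/
def e2 (i : Fin 2) : E2 := EuclideanSpace.single i 1

/-- The Hessian matrix `D²u(x)`. -/
def hess (u : E2 → ℝ) (x : E2) : Matrix (Fin 2) (Fin 2) ℝ :=
  Matrix.of fun i j => iteratedFDeriv ℝ 2 u x ![e2 i, e2 j]

/-- The determinant of the Hessian, `det D²u(x)`. -/
def detHess (u : E2 → ℝ) (x : E2) : ℝ := (hess u x).det

/-- The operator norm of a `2 × 2` real matrix. -/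
def opNorm2 (M : Matrix (Fin 2) (Fin 2) ℝ) : ℝ :=
  ‖(Matrix.toEuclideanCLM (𝕜 := ℝ) M : E2 →L[ℝ] E2)‖

/-- The partial Legendre transform of `u` in the `e₁`-direction (relative to `B_R(0)`). -/
def pLeg (R : ℝ) (u : E2 → ℝ) (y : E2) : ℝ :=
  sSup ((fun x₁ => x₁ * y 0 - u (pt x₁ (y 1))) '' {x₁ : ℝ | pt x₁ (y 1) ∈ ball (0:E2) R})

/-- The partial Legendre map `𝒫(x₁,x₂) = (∂_{x₁}u(x), x₂)`. -/
def Pmap (u : E2 → ℝ) (x : E2) : E2 := pt (fderiv ℝ u x (e2 0)) (x 1)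

/-!
Convexity compares the derivative of `u` at `x` with the increments of `u` at `x ± v`, so that
`|Du(x) v|` is at most `max u(x ± v) - u(x)`. Apply this with `v = (t / 8) e`: the
points `x ± v` stay in the ball, and there `u` is at most its bound `m` on the axis plus `b` times
the distance to the axis, by the mean value inequality. As `u(x) ≥ 0`, dividing by `t / 8` gives
the bound.
-/

section NormedSpace

variable {E : Type*} [NormedAddCommGroup E] [NormedSpace ℝ E] {S : Set E} {u : E → ℝ}

lemma fderiv_apply_le_sub_of_convexOn {x v : E} (hconv : ConvexOn ℝ S u) (hx : x ∈ S)
    (hxv : x + v ∈ S) (hdiff : DifferentiableAt ℝ u x) :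
    fderiv ℝ u x v ≤ u (x + v) - u x := by
  have hline : ConvexOn ℝ (AffineMap.lineMap x (x + v) ⁻¹' S)
      (u ∘ AffineMap.lineMap (k := ℝ) x (x + v)) := hconv.comp_affineMap _
  have hderiv : HasDerivAt (u ∘ AffineMap.lineMap (k := ℝ) x (x + v)) (fderiv ℝ u x v) 0 := by
    refine HasFDerivAt.comp_hasDerivAt 0 (by simpa using hdiff.hasFDerivAt) ?_
    simpa using AffineMap.hasDerivAt_lineMap (a := x) (b := x + v) (x := (0 : ℝ))
  simpa [slope_def_field] using hline.le_slope_of_hasDerivAt (x := 0) (y := 1)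
    (by simpa using hx) (by simpa using hxv) one_pos hderiv

lemma abs_fderiv_apply_le_sub_of_convexOn {x v : E} {M : ℝ} (hconv : ConvexOn ℝ S u)
    (hx : x ∈ S) (hadd : x + v ∈ S) (hsub : x - v ∈ S) (hdiff : DifferentiableAt ℝ u x)
    (hadd_le : u (x + v) ≤ M) (hsub_le : u (x - v) ≤ M) :
    |fderiv ℝ u x v| ≤ M - u x := by
  have hforward := fderiv_apply_le_sub_of_convexOn hconv hx hadd hdiff
  have hbackward := fderiv_apply_le_sub_of_convexOn (v := -v) hconv hx
    (by rwa [← sub_eq_add_neg]) hdiff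
  rw [map_neg, ← sub_eq_add_neg] at hbackward
  exact abs_le.2 ⟨by linarith, by linarith⟩

lemma le_add_mul_norm_of_norm_fderiv_le {p w : E} {b : ℝ} (hS : Convex ℝ S)
    (hdiff : ∀ x ∈ S, DifferentiableAt ℝ u x) (hb : ∀ x ∈ S, ‖fderiv ℝ u x‖ ≤ b)
    (hp : p ∈ S) (hpw : p + w ∈ S) :
    u (p + w) ≤ u p + b * ‖w‖ := by
  have hmean := hS.norm_image_sub_le_of_norm_fderiv_le hdiff hb hp hpw
  rw [add_sub_cancel_left] at hmean
  linarith [(Real.le_norm_self _).trans hmean]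

end NormedSpace

section InnerProductSpace

variable {E : Type*} [NormedAddCommGroup E] [InnerProductSpace ℝ E] {e w : E}

lemma smul_add_mem_closedBall_of_inner_eq_zero {s t : ℝ} (he : ‖e‖ = 1)
    (hew : inner ℝ e w = 0) (ht : 0 ≤ t) (hst : s ^ 2 + ‖w‖ ^ 2 ≤ t ^ 2) :
    s • e + w ∈ closedBall (0 : E) t := by
  have hpyth : ‖s • e + w‖ ^ 2 = s ^ 2 + ‖w‖ ^ 2 := by
    rw [norm_add_pow_two_real, real_inner_smul_left, hew, norm_smul, he]
    simp
  rw [mem_closedBall_zero_iff]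
  exact le_of_sq_le_sq (hpyth.trans_le hst) ht

theorem partial_derivative_bound_on_strip_general {u : E → ℝ} {t b m x₁ : ℝ}
    (he : ‖e‖ = 1) (hew : inner ℝ e w = 0)
    (hconv : ConvexOn ℝ (closedBall (0 : E) t) u)
    (hdiff : ∀ x ∈ closedBall (0 : E) t, DifferentiableAt ℝ u x)
    (hpos : ∀ x ∈ closedBall (0 : E) t, 0 ≤ u x)
    (hb : ∀ x ∈ closedBall (0 : E) t, ‖fderiv ℝ u x‖ ≤ b)
    (haxis : ∀ s ∈ Ioo 0 t, u (s • e) ≤ m)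
    (hlower : t / 4 < x₁) (hupper : x₁ < 3 * t / 4) (hw : ‖w‖ < t / 4) :
    |fderiv ℝ u (x₁ • e + w) e| ≤ 8 / t * (m + b * ‖w‖) := by
  have ht : 0 < t := by linarith
  have hmem : ∀ s ∈ Ioo 0 (7 * t / 8), s • e + w ∈ closedBall (0 : E) t := by
    rintro s ⟨hs₀, hs⟩
    refine smul_add_mem_closedBall_of_inner_eq_zero he hew ht.le ?_
    nlinarith [norm_nonneg w]
  have hle : ∀ s ∈ Ioo 0 (7 * t / 8), u (s • e + w) ≤ m + b * ‖w‖ := by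
    rintro s ⟨hs₀, hs⟩
    have hse : s • e ∈ closedBall (0 : E) t := by
      rw [mem_closedBall_zero_iff, norm_smul, he, mul_one, Real.norm_of_nonneg hs₀.le]
      linarith
    linarith [haxis s ⟨hs₀, by linarith⟩, le_add_mul_norm_of_norm_fderiv_le
      (convex_closedBall 0 t) hdiff hb hse (hmem s ⟨hs₀, hs⟩)]
  have hx := hmem x₁ ⟨by linarith, by linarith⟩
  have hright : x₁ + t / 8 ∈ Ioo 0 (7 * t / 8) := ⟨by linarith, by linarith⟩
  have hleft : x₁ - t / 8 ∈ Ioo 0 (7 * t / 8) := ⟨by linarith, by linarith⟩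
  have hadd : x₁ • e + w + (t / 8) • e = (x₁ + t / 8) • e + w := by module
  have hsub : x₁ • e + w - (t / 8) • e = (x₁ - t / 8) • e + w := by module
  have hstep : |fderiv ℝ u (x₁ • e + w) ((t / 8) • e)| ≤ m + b * ‖w‖ - u (x₁ • e + w) :=
    abs_fderiv_apply_le_sub_of_convexOn hconv hx (hadd ▸ hmem _ hright) (hsub ▸ hmem _ hleft)
      (hdiff _ hx) (hadd ▸ hle _ hright) (hsub ▸ hle _ hleft)
  rw [map_smul, smul_eq_mul, abs_mul, abs_of_pos (by positivity : 0 < t / 8)] at hstep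
  calc |fderiv ℝ u (x₁ • e + w) e|
      = 8 / t * (t / 8 * |fderiv ℝ u (x₁ • e + w) e|) := by field_simp
    _ ≤ 8 / t * (m + b * ‖w‖) := by gcongr; linarith [hpos _ hx]

end InnerProductSpace

lemma norm_gradient_eq_norm_fderiv {E : Type*} [NormedAddCommGroup E] [InnerProductSpace ℝ E]
    [CompleteSpace E] (u : E → ℝ) (x : E) : ‖gradient u x‖ = ‖fderiv ℝ u x‖ :=
  LinearIsometryEquiv.norm_map _ _

lemma orthonormal_e2 : Orthonormal ℝ e2 :=
  EuclideanSpace.orthonormal_single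

lemma pt_eq_smul_add_smul (a c : ℝ) : pt a c = a • e2 0 + c • e2 1 := by
  ext i
  fin_cases i <;> simp [pt, e2]

lemma norm_smul_e2 (c : ℝ) (i : Fin 2) : ‖c • e2 i‖ = |c| := by
  rw [norm_smul, orthonormal_e2.1, mul_one, Real.norm_eq_abs]

lemma inner_e2_zero_smul_e2_one (c : ℝ) : inner ℝ (e2 0) (c • e2 1) = 0 := by
  rw [real_inner_smul_right, orthonormal_e2.2 zero_ne_one, mul_zero]

/-- if u is C¹ on a neighborhood of B̄_t(0), convex on B̄_t(0),
with u(0) = 0, u ≥ 0, |Du| ≤ b on B̄_t(0), and u(x₁, 0) ≤ m for all x₁ ∈ (−τ, t)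
for some m > 0 and τ ∈ (0, t], then for every (x₁,x₂) with t/4 < x₁ < 3t/4 and
|x₂| < t/4 one has |∂_{x₁}u(x₁,x₂)| ≤ (8/t)(m + 2b|x₂|). -/
theorem partial_derivative_bound_on_strip
    (t b m τ : ℝ) (ht : 0 < t) (hm : 0 < m) (hτ₀ : 0 < τ) (hτt : τ ≤ t)
    (u : E2 → ℝ) (U : Set E2) (hU : IsOpen U) (hUt : closedBall (0:E2) t ⊆ U)
    (hu : ContDiffOn ℝ 1 u U)
    (hconv : ConvexOn ℝ (closedBall (0:E2) t) u)
    (hu0 : u 0 = 0)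
    (hpos : ∀ x ∈ closedBall (0:E2) t, 0 ≤ u x)
    (hb : ∀ x ∈ closedBall (0:E2) t, ‖gradient u x‖ ≤ b)
    (haxis : ∀ x₁ : ℝ, x₁ ∈ Set.Ioo (-τ) t → u (pt x₁ 0) ≤ m) :
    ∀ x₁ x₂ : ℝ, t / 4 < x₁ → x₁ < 3 * t / 4 → |x₂| < t / 4 →
      |fderiv ℝ u (pt x₁ x₂) (e2 0)| ≤ 8 / t * (m + 2 * b * |x₂|) := by
  intro x₁ x₂ hlower hupper hx₂
  have hdiff : ∀ x ∈ closedBall (0 : E2) t, DifferentiableAt ℝ u x := fun x hx =>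
    (hu.differentiableOn one_ne_zero).differentiableAt (hU.mem_nhds (hUt hx))
  have hb₀ : 0 ≤ b := (norm_nonneg _).trans (hb 0 (mem_closedBall_self ht.le))
  simp only [norm_gradient_eq_norm_fderiv] at hb
  calc |fderiv ℝ u (pt x₁ x₂) (e2 0)| ≤ 8 / t * (m + b * |x₂|) := by
        rw [← norm_smul_e2 x₂ 1] at hx₂ ⊢
        rw [pt_eq_smul_add_smul]
        refine partial_derivative_bound_on_strip_general (orthonormal_e2.1 0)
          (inner_e2_zero_smul_e2_one x₂) hconv hdiff hpos hb (fun s hs => ?_) hlower hupper hx₂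
        simpa [pt_eq_smul_add_smul] using haxis s ⟨by linarith [hs.1], hs.2⟩
    _ ≤ 8 / t * (m + 2 * b * |x₂|) := by
        gcongr
        linarith
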